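/- For every γ ∈ (0,1): ∑_{t=1}^∞ γ^t · log(t) ≤ (1/(1-γ)) · (1 + log(1/(1-γ))), where log is the natural logarithm. -/

import Mathlib

/-!
Concavity of the logarithm gives the tangent-line bound at `1 / (1 - γ)`, the natural time scale
of the discount:
`log t ≤ (1 - γ) t - 1 + log (1 / (1 - γ))`.
Weighting by `γ ^ t` and summing, the terms `(1 - γ) t` and `-1` cancel exactly, because
`∑ t γ ^ t = γ / (1 - γ) ^ 2` and `∑ γ ^ t = γ / (1 - γ)`. What remains is
`γ / (1 - γ) * log (1 / (1 - γ))`, which is at most the claimed bound. The same comparison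
gives summability of the series, so its `tsum` is a genuine sum.
-/

open Real

/-- For every `γ ∈ (0,1)`:
`∑_{t=1}^∞ γ^t log(t) ≤ (1/(1-γ)) (1 + log(1/(1-γ)))`, with the natural logarithm.
(The sum over `t ∈ {1,2,...}` is indexed here by `t = s + 1` for `s : ℕ`.) -/
theorem discounted_log_series_bound (γ : ℝ) (hγ : γ ∈ Set.Ioo (0 : ℝ) 1) :
    ∑' s : ℕ, γ ^ (s + 1) * Real.log (s + 1)
      ≤ (1 / (1 - γ)) * (1 + Real.log (1 / (1 - γ))) := by
  obtain ⟨h0, h1⟩ := hγ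
  have hd : 0 < 1 - γ := by linarith
  have hL : 0 ≤ Real.log (1 / (1 - γ)) :=
    Real.log_nonneg (by rw [le_div_iff₀ hd]; linarith)
  set L := Real.log (1 / (1 - γ)) with hLdef
  have tangent (s : ℕ) : Real.log (s + 1) ≤ (1 - γ) * (s + 1) - 1 + L := by
    have hs : (0 : ℝ) < s + 1 := by positivity
    have h := Real.log_le_sub_one_of_pos (mul_pos hd hs)
    rw [Real.log_mul hd.ne' hs.ne'] at h
    rw [hLdef, one_div, Real.log_inv]
    linarith
  have hsum : HasSum (fun s : ℕ => γ ^ (s + 1) * ((1 - γ) * (s + 1) - 1 + L))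
      (γ / (1 - γ) * L) := by
    have hn : ‖γ‖ < 1 := by rwa [Real.norm_of_nonneg h0.le]
    have h := ((hasSum_coe_mul_geometric_of_norm_lt_one hn).mul_left (γ * (1 - γ))).add
      ((hasSum_geometric_of_lt_one h0.le h1).mul_left (γ * (L - γ)))
    have hval : γ * (1 - γ) * (γ / (1 - γ) ^ 2) + γ * (L - γ) * (1 - γ)⁻¹
        = γ / (1 - γ) * L := by
      field_simp
      ring
    rw [hval] at h
    have hterm : (fun s : ℕ => γ ^ (s + 1) * ((1 - γ) * (s + 1) - 1 + L))
        = fun s : ℕ => γ * (1 - γ) * (s * γ ^ s) + γ * (L - γ) * γ ^ s := by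
      funext s
      ring
    rw [hterm]
    exact h
  have hle (s : ℕ) : γ ^ (s + 1) * Real.log (s + 1)
      ≤ γ ^ (s + 1) * ((1 - γ) * (s + 1) - 1 + L) :=
    mul_le_mul_of_nonneg_left (tangent s) (by positivity)
  have hnonneg (s : ℕ) : 0 ≤ γ ^ (s + 1) * Real.log (s + 1) :=
    mul_nonneg (by positivity) (Real.log_nonneg (by linarith [(Nat.cast_nonneg s : (0 : ℝ) ≤ s)]))
  have hsummable := Summable.of_nonneg_of_le hnonneg hle hsum.summable
  calc ∑' s : ℕ, γ ^ (s + 1) * Real.log (s + 1)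
      ≤ γ / (1 - γ) * L := hasSum_le hle hsummable.hasSum hsum
    _ ≤ 1 / (1 - γ) * (1 + L) := by
        gcongr
        linarith
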